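/- If E and F are finite-dimensional normed spaces of the same dimension and T : AC(X,E) → AC(Y,F) is a separating linear bijection, then the support map h : Y → X is a homeomorphism. -/

import Mathlib

open Set

def AbsCont {E : Type*} [NormedAddCommGroup E] {X : Set ℝ} (f : X → E) : Prop :=
  ∀ ε > (0 : ℝ), ∃ δ > (0 : ℝ), ∀ n : ℕ, ∀ a b : Fin n → X,
    (∀ i, (a i : ℝ) < b i) →
    (∀ i j, i ≠ j → Disjoint (Set.Ioo (a i : ℝ) (b i)) (Set.Ioo (a j : ℝ) (b j))) →
    (∑ i, ((b i : ℝ) - a i)) < δ →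
    (∑ i, ‖f (b i) - f (a i)‖) < ε

/-- `T` is separating on absolutely continuous functions: disjoint cozero sets are
mapped to disjoint cozero sets. -/
def Separating {E F : Type*} [NormedAddCommGroup E] [NormedAddCommGroup F]
    {X Y : Set ℝ} (T : (X → E) → (Y → F)) : Prop :=
  ∀ f g : X → E, AbsCont f → AbsCont g → (∀ x, f x = 0 ∨ g x = 0) →
    ∀ y, T f y = 0 ∨ T g y = 0

/-- `x ∈ supp(δ_y ∘ T)`: every open neighborhood `U` of `x` admits an absolutely
continuous `f` with cozero set contained in `U` and `T f y ≠ 0`. -/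
def InSupp {E F : Type*} [NormedAddCommGroup E] [NormedAddCommGroup F]
    {X Y : Set ℝ} (T : (X → E) → (Y → F)) (y : Y) (x : X) : Prop :=
  ∀ U : Set X, IsOpen U → x ∈ U →
    ∃ f : X → E, AbsCont f ∧ (∀ z, f z ≠ 0 → z ∈ U) ∧ T f y ≠ 0

/-! Call `y` singular if some `f` with `f (h y) = 0` has `T f y ≠ 0`. If infinitely many points were
of the form `h y` with `y` singular, a gliding hump would produce an unbounded `T G`: choose such
points `xₖ = h yₖ` in disjoint balls and functions `fₖ` vanishing at `xₖ` with `‖T fₖ yₖ‖ ≥ k`, cut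
`fₖ` off so close to `xₖ` that its variation drops below `2⁻ᵏ`, and let `G` be the sum. Being
finitely many and not isolated, the images of singular points have dense complement. At a regular
`y`, `T f y = J y (f (h y))` for a linear `J y : E → F`, which is onto and hence injective by the
equality of dimensions. Thus if a function supported in an open set of singular points is `T f`,
then `f` vanishes on a dense set, so regular points are dense. Both sides of the formula are
continuous in `y`, hence there are no singular points at all. If `h y₁ = h y₂`, the injectivity of
`J y₁` forces every `T f` that vanishes at `y₁` to vanish at `y₂`, so that `y₁ = y₂`. -/

open Filter Metric MeasureTheory Module Topology

section IntervalFamilies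

variable {X : Set ℝ} {ι : Type*} {I : Finset ι} {a b : ι → X}

/-- A finite family of intervals with endpoints in `X`, as in the definition of `AbsCont`. It is
indexed by a `Finset` so that subfamilies are again of this form. -/
structure IsIntervalFamily (I : Finset ι) (a b : ι → X) : Prop where
  lt : ∀ i ∈ I, (a i : ℝ) < b i
  pairwiseDisjoint : (I : Set ι).PairwiseDisjoint fun i ↦ Ioo (a i : ℝ) (b i)

theorem IsIntervalFamily.mono {J : Finset ι} (h : IsIntervalFamily I a b) (hJ : J ⊆ I) :
    IsIntervalFamily J a b :=
  ⟨fun i hi ↦ h.lt i (hJ hi), h.pairwiseDisjoint.subset (Finset.coe_subset.2 hJ)⟩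

theorem sum_sub_le_of_pairwiseDisjoint_Ioo {a b : ι → ℝ} {c d : ℝ} (hcd : c ≤ d)
    (hab : ∀ i ∈ I, a i ≤ b i) (hdisj : (I : Set ι).PairwiseDisjoint fun i ↦ Ioo (a i) (b i))
    (hc : ∀ i ∈ I, c ≤ a i) (hd : ∀ i ∈ I, b i ≤ d) : ∑ i ∈ I, (b i - a i) ≤ d - c := by
  have hsub : ⋃ i ∈ I, Ioo (a i) (b i) ⊆ Icc c d :=
    iUnion₂_subset fun i hi ↦ Ioo_subset_Icc_self.trans (Icc_subset_Icc (hc i hi) (hd i hi))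
  calc ∑ i ∈ I, (b i - a i) = ∑ i ∈ I, volume.real (Ioo (a i) (b i)) :=
        Finset.sum_congr rfl fun i hi ↦ (Real.volume_real_Ioo_of_le (hab i hi)).symm
    _ = volume.real (⋃ i ∈ I, Ioo (a i) (b i)) :=
        (measureReal_biUnion_finset hdisj (fun _ _ ↦ measurableSet_Ioo)
          fun _ _ ↦ measure_Ioo_lt_top.ne).symm
    _ ≤ volume.real (Icc c d) := measureReal_mono hsub measure_Icc_lt_top.ne
    _ = d - c := Real.volume_real_Icc_of_le hcd

theorem IsIntervalFamily.sum_sub_le_of_monotone (h : IsIntervalFamily I a b) {u : X → ℝ}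
    (hu : Monotone u) {c d : ℝ} (hcd : c ≤ d) (hc : ∀ i ∈ I, c ≤ u (a i))
    (hd : ∀ i ∈ I, u (b i) ≤ d) : ∑ i ∈ I, (u (b i) - u (a i)) ≤ d - c := by
  refine sum_sub_le_of_pairwiseDisjoint_Ioo hcd (fun i hi ↦ hu (h.lt i hi).le)
    (fun i hi j hj hij ↦ ?_) hc hd
  have hdisj : min (b i) (b j) ≤ max (a i) (a j) := by
    simpa only [Function.onFun, Ioo_disjoint_Ioo, min_le_iff, le_max_iff, Subtype.coe_le_coe]
      using h.pairwiseDisjoint hi hj hij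
  rw [Function.onFun, Ioo_disjoint_Ioo, ← hu.map_min, ← hu.map_max]
  exact hu hdisj

end IntervalFamilies

section Variation

variable {X : Set ℝ} {E : Type*} [NormedAddCommGroup E] {f : X → E} {s : Set X} {C : ℝ}

/-- The total variation of `f` over `s` is at most `C`, where the variation is taken over the same
families of intervals as in `AbsCont` rather than over monotone sequences as in `eVariationOn`. -/
def VariationOnLE (f : X → E) (s : Set X) (C : ℝ) : Prop :=
  ∀ (ι : Type) (I : Finset ι) (a b : ι → X), IsIntervalFamily I a b →
    (∀ i ∈ I, a i ∈ s ∧ b i ∈ s) → ∑ i ∈ I, ‖f (b i) - f (a i)‖ ≤ C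

theorem VariationOnLE.nonneg (h : VariationOnLE f s C) : 0 ≤ C := by
  simpa using h Empty ∅ Empty.elim Empty.elim ⟨by simp, by simp⟩ (by simp)

theorem VariationOnLE.mono {t : Set X} (h : VariationOnLE f t C) (hst : s ⊆ t) :
    VariationOnLE f s C :=
  fun ι I a b hI hs ↦ h ι I a b hI fun i hi ↦ ⟨hst (hs i hi).1, hst (hs i hi).2⟩

theorem VariationOnLE.norm_sub_le (h : VariationOnLE f s C) {x y : X} (hx : x ∈ s) (hy : y ∈ s) :
    ‖f x - f y‖ ≤ C := by
  wlog hxy : y < x generalizing x y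
  · rcases (not_lt.1 hxy).eq_or_lt with rfl | hlt
    · simpa using h.nonneg
    · rw [norm_sub_rev]
      exact this hy hx hlt
  simpa using h Unit {()} (fun _ ↦ y) (fun _ ↦ x) ⟨fun _ _ ↦ hxy, by simp⟩ fun _ _ ↦ ⟨hy, hx⟩

theorem variationOnLE_of_monotone {u : X → ℝ} (hu : Monotone u) {c d : ℝ} (hcd : c ≤ d)
    (hc : ∀ x ∈ s, c ≤ u x) (hd : ∀ x ∈ s, u x ≤ d) : VariationOnLE u s (d - c) := by
  intro ι I a b hI hs
  calc ∑ i ∈ I, ‖u (b i) - u (a i)‖ = ∑ i ∈ I, (u (b i) - u (a i)) :=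
        Finset.sum_congr rfl fun i hi ↦
          Real.norm_of_nonneg (sub_nonneg.2 (hu (hI.lt i hi).le))
    _ ≤ d - c := hI.sum_sub_le_of_monotone hu hcd (fun i hi ↦ hc _ (hs i hi).1)
        fun i hi ↦ hd _ (hs i hi).2

theorem VariationOnLE.sub {g : X → E} {D : ℝ} (hf : VariationOnLE f s C)
    (hg : VariationOnLE g s D) : VariationOnLE (f - g) s (C + D) := by
  intro ι I a b hI hs
  calc ∑ i ∈ I, ‖(f - g) (b i) - (f - g) (a i)‖
      ≤ ∑ i ∈ I, (‖f (b i) - f (a i)‖ + ‖g (b i) - g (a i)‖) := by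
        refine Finset.sum_le_sum fun i _ ↦ ?_
        rw [Pi.sub_apply, Pi.sub_apply, sub_sub_sub_comm]
        exact _root_.norm_sub_le _ _
    _ ≤ C + D := by
        rw [Finset.sum_add_distrib]
        exact add_le_add (hf ι I a b hI hs) (hg ι I a b hI hs)

theorem VariationOnLE.tsum {κ : Type*} {g : κ → X → E} {C : κ → ℝ}
    (hg : ∀ k, VariationOnLE (g k) s (C k)) (hC : Summable C)
    (hsum : ∀ x ∈ s, Summable fun k ↦ g k x) :
    VariationOnLE (fun x ↦ ∑' k, g k x) s (∑' k, C k) := by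
  intro ι I a b hI hs
  have hnorm : ∀ i ∈ I, Summable fun k ↦ ‖g k (b i) - g k (a i)‖ := fun i hi ↦
    hC.of_nonneg_of_le (fun _ ↦ norm_nonneg _)
      fun k ↦ (hg k).norm_sub_le (hs i hi).2 (hs i hi).1
  calc ∑ i ∈ I, ‖∑' k, g k (b i) - ∑' k, g k (a i)‖
      ≤ ∑ i ∈ I, ∑' k, ‖g k (b i) - g k (a i)‖ := by
        refine Finset.sum_le_sum fun i hi ↦ ?_
        rw [← (hsum _ (hs i hi).2).tsum_sub (hsum _ (hs i hi).1)]
        exact norm_tsum_le_tsum_norm (hnorm i hi)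
    _ = ∑' k, ∑ i ∈ I, ‖g k (b i) - g k (a i)‖ := (Summable.tsum_finsetSum hnorm).symm
    _ ≤ ∑' k, C k := (summable_sum hnorm).tsum_le_tsum (fun k ↦ hg k ι I a b hI hs) hC

end Variation

section Smul

variable {𝕜 E : Type*} [NormedField 𝕜] [NormedAddCommGroup E] [NormedSpace 𝕜 E]

theorem norm_smul_sub_smul_le {r t : 𝕜} {v w : E} {K M : ℝ} (hr : ‖r‖ ≤ K) (hw : ‖w‖ ≤ M) :
    ‖r • v - t • w‖ ≤ K * ‖v - w‖ + M * ‖r - t‖ :=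
  calc ‖r • v - t • w‖ = ‖r • (v - w) + (r - t) • w‖ := by
        rw [smul_sub, sub_smul, sub_add_sub_cancel]
    _ ≤ ‖r‖ * ‖v - w‖ + ‖r - t‖ * ‖w‖ := by
        simpa only [norm_smul] using norm_add_le (r • (v - w)) ((r - t) • w)
    _ ≤ K * ‖v - w‖ + M * ‖r - t‖ := by
        rw [mul_comm ‖r - t‖]
        gcongr

theorem VariationOnLE.smul_of_eq_zero {X : Set ℝ} {φ : X → 𝕜} {f : X → E} {s : Set X} {V C M : ℝ}
    (hφ : VariationOnLE φ univ V) (hφ_le : ∀ x, ‖φ x‖ ≤ 1) (hφ_zero : ∀ x ∉ s, φ x = 0)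
    (hf : VariationOnLE f s C) (hM : 0 ≤ M) (hfM : ∀ x ∈ s, ‖f x‖ ≤ M) :
    VariationOnLE (φ • f) univ (C + M * V) := by
  classical
  intro ι I a b hI _
  have norm_smul_le : ∀ x, ‖φ x • f x‖ ≤ M * ‖φ x‖ := by
    intro x
    rw [norm_smul, mul_comm]
    by_cases hx : x ∈ s
    · gcongr
      exact hfM x hx
    · simp [hφ_zero x hx]
  -- If an endpoint lies outside `s`, one of the two terms vanishes and `φ` alone pays for the jump.
  have term_le : ∀ i, ‖φ (b i) • f (b i) - φ (a i) • f (a i)‖ ≤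
      (if a i ∈ s ∧ b i ∈ s then ‖f (b i) - f (a i)‖ else 0) + M * ‖φ (b i) - φ (a i)‖ := by
    intro i
    split_ifs with hi
    · simpa using norm_smul_sub_smul_le (v := f (b i)) (t := φ (a i)) (hφ_le (b i))
        (hfM (a i) hi.1)
    · rcases not_and_or.1 hi with ha | hb
      · simpa [hφ_zero _ ha] using norm_smul_le (b i)
      · simpa [hφ_zero _ hb] using norm_smul_le (a i)
  calc ∑ i ∈ I, ‖(φ • f) (b i) - (φ • f) (a i)‖
      ≤ ∑ i ∈ I with a i ∈ s ∧ b i ∈ s, ‖f (b i) - f (a i)‖ +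
          M * ∑ i ∈ I, ‖φ (b i) - φ (a i)‖ := by
        rw [Finset.sum_filter, Finset.mul_sum, ← Finset.sum_add_distrib]
        exact Finset.sum_le_sum fun i _ ↦ term_le i
    _ ≤ C + M * V := by
        gcongr
        · exact hf ι _ a b (hI.mono (Finset.filter_subset _ _))
            fun i hi ↦ (Finset.mem_filter.1 hi).2
        · exact hφ ι I a b hI (by simp)

end Smul

section AbsCont

variable {X : Set ℝ} {E : Type*} [NormedAddCommGroup E] {f : X → E}

theorem absCont_iff_intervalFamily : AbsCont f ↔ ∀ ε > 0, ∃ δ > 0, ∀ (ι : Type) (I : Finset ι)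
    (a b : ι → X), IsIntervalFamily I a b → ∑ i ∈ I, ((b i : ℝ) - a i) < δ →
      ∑ i ∈ I, ‖f (b i) - f (a i)‖ < ε := by
  refine forall₂_congr fun ε _ ↦ exists_congr fun δ ↦ and_congr_right fun _ ↦ ⟨?_, ?_⟩
  · intro H ι I a b hI hlt
    have sum_eq : ∀ u : ι → ℝ, ∑ i ∈ I, u i = ∑ k, u (I.equivFin.symm k) := fun u ↦ by
      rw [← Finset.sum_coe_sort I, Equiv.sum_comp I.equivFin.symm fun i ↦ u i]
    rw [sum_eq] at hlt ⊢
    refine H I.card (fun k ↦ a (I.equivFin.symm k)) (fun k ↦ b (I.equivFin.symm k))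
      (fun k ↦ hI.lt _ (Subtype.coe_prop _)) (fun j k hjk ↦ ?_) hlt
    exact hI.pairwiseDisjoint (Subtype.coe_prop _) (Subtype.coe_prop _)
      (Subtype.coe_injective.ne (I.equivFin.symm.injective.ne hjk))
  · intro H n a b hlt hdisj
    exact H (Fin n) Finset.univ a b ⟨fun i _ ↦ hlt i, fun i _ j _ hij ↦ hdisj i j hij⟩

theorem AbsCont.of_norm_sub_le {F G : Type*} [NormedAddCommGroup F] [NormedAddCommGroup G]
    {g : X → F} {k : X → G} {A B : ℝ} (hf : AbsCont f) (hg : AbsCont g) (hA : 0 ≤ A) (hB : 0 ≤ B)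
    (h : ∀ x y, ‖k x - k y‖ ≤ A * ‖f x - f y‖ + B * ‖g x - g y‖) : AbsCont k := by
  intro ε hε
  obtain ⟨δ, hδ, Hf⟩ := hf (ε / (A + B + 1)) (by positivity)
  obtain ⟨δ', hδ', Hg⟩ := hg (ε / (A + B + 1)) (by positivity)
  refine ⟨min δ δ', lt_min hδ hδ', fun n a b hlt hdisj hsum ↦ ?_⟩
  have hfsum := Hf n a b hlt hdisj (hsum.trans_le (min_le_left _ _))
  have hgsum := Hg n a b hlt hdisj (hsum.trans_le (min_le_right _ _))
  calc ∑ i, ‖k (b i) - k (a i)‖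
      ≤ A * ∑ i, ‖f (b i) - f (a i)‖ + B * ∑ i, ‖g (b i) - g (a i)‖ := by
        rw [Finset.mul_sum, Finset.mul_sum, ← Finset.sum_add_distrib]
        exact Finset.sum_le_sum fun i _ ↦ h _ _
    _ ≤ A * (ε / (A + B + 1)) + B * (ε / (A + B + 1)) := by gcongr
    _ = (A + B) / (A + B + 1) * ε := by ring
    _ < ε := mul_lt_of_lt_one_left hε ((div_lt_one (by positivity)).2 (lt_add_one _))

theorem absCont_coe : AbsCont ((↑) : X → ℝ) := by
  refine fun ε hε ↦ ⟨ε, hε, fun n a b hlt _ hsum ↦ ?_⟩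
  simpa only [Real.norm_of_nonneg (sub_nonneg.2 (hlt _).le)] using hsum

theorem absCont_const (e : E) : AbsCont fun _ : X ↦ e :=
  .of_norm_sub_le absCont_coe absCont_coe le_rfl le_rfl fun _ _ ↦ by simp

theorem AbsCont.add {g : X → E} (hf : AbsCont f) (hg : AbsCont g) : AbsCont (f + g) :=
  .of_norm_sub_le hf hg zero_le_one zero_le_one fun x y ↦ by
    simpa [add_sub_add_comm] using norm_add_le (f x - f y) (g x - g y)

theorem AbsCont.smul {𝕜 : Type*} [NormedField 𝕜] [NormedSpace 𝕜 E] {φ : X → 𝕜} {K M : ℝ}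
    (hφ : AbsCont φ) (hf : AbsCont f) (hφK : ∀ x, ‖φ x‖ ≤ K) (hfM : ∀ x, ‖f x‖ ≤ M) :
    AbsCont (φ • f) := by
  rcases isEmpty_or_nonempty X with _ | ⟨⟨x⟩⟩
  · simpa only [Subsingleton.elim (φ • f) f] using hf
  · exact .of_norm_sub_le hf hφ ((norm_nonneg _).trans (hφK x)) ((norm_nonneg _).trans (hfM x))
      fun x y ↦ norm_smul_sub_smul_le (hφK x) (hfM y)

theorem AbsCont.of_forall_variationOnLE_sub
    (h : ∀ ε > 0, ∃ g : X → E, AbsCont g ∧ VariationOnLE (f - g) univ ε) : AbsCont f := by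
  refine absCont_iff_intervalFamily.2 fun ε hε ↦ ?_
  obtain ⟨g, hg, hfg⟩ := h (ε / 2) (half_pos hε)
  obtain ⟨δ, hδ, H⟩ := absCont_iff_intervalFamily.1 hg (ε / 2) (half_pos hε)
  refine ⟨δ, hδ, fun ι I a b hI hsum ↦ ?_⟩
  calc ∑ i ∈ I, ‖f (b i) - f (a i)‖
      ≤ ∑ i ∈ I, (‖(f - g) (b i) - (f - g) (a i)‖ + ‖g (b i) - g (a i)‖) :=
        Finset.sum_le_sum fun i _ ↦ by
          have split : f (b i) - f (a i) = (f - g) (b i) - (f - g) (a i) + (g (b i) - g (a i)) := by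
            simp only [Pi.sub_apply]
            abel
          exact split ▸ norm_add_le _ _
    _ < ε := by
        rw [Finset.sum_add_distrib]
        linarith [hfg ι I a b hI (by simp), H ι I a b hI hsum]

theorem AbsCont.exists_variationOnLE_ball (hf : AbsCont f) (x : X) {ε : ℝ} (hε : 0 < ε) :
    ∃ r > 0, VariationOnLE f (ball x r) ε := by
  obtain ⟨δ, hδ, H⟩ := absCont_iff_intervalFamily.1 hf ε hε
  refine ⟨δ / 3, by positivity, fun ι I a b hI hs ↦ (H ι I a b hI ?_).le⟩
  have mem_Ioo : ∀ z ∈ ball x (δ / 3), (z : ℝ) ∈ Ioo (x - δ / 3 : ℝ) (x + δ / 3) :=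
    fun z hz ↦ by rwa [← Real.ball_eq_Ioo]
  calc ∑ i ∈ I, ((b i : ℝ) - a i) ≤ (x + δ / 3) - (x - δ / 3) :=
        hI.sum_sub_le_of_monotone (Subtype.mono_coe _) (by linarith)
          (fun i hi ↦ (mem_Ioo _ (hs i hi).1).1.le) fun i hi ↦ (mem_Ioo _ (hs i hi).2).2.le
    _ < δ := by linarith

theorem AbsCont.continuous (hf : AbsCont f) : Continuous f := by
  refine Metric.continuous_iff.2 fun x ε hε ↦ ?_
  obtain ⟨r, hr, hvar⟩ := hf.exists_variationOnLE_ball x (half_pos hε)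
  refine ⟨r, hr, fun z hz ↦ ?_⟩
  rw [dist_eq_norm]
  exact (hvar.norm_sub_le hz (mem_ball_self hr)).trans_lt (half_lt_self hε)

theorem AbsCont.exists_forall_norm_le [CompactSpace X] (hf : AbsCont f) :
    ∃ M, ∀ x, ‖f x‖ ≤ M := by
  simpa using isCompact_univ.exists_bound_of_continuousOn hf.continuous.continuousOn

theorem AbsCont.tsum {g : ℕ → X → E} {C : ℕ → ℝ} (hg : ∀ k, AbsCont (g k))
    (hvar : ∀ k, VariationOnLE (g k) univ (C k)) (hC : Summable C)
    (hsum : ∀ x, Summable fun k ↦ g k x) : AbsCont fun x ↦ ∑' k, g k x := by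
  refine .of_forall_variationOnLE_sub fun ε hε ↦ ?_
  obtain ⟨N, hN⟩ : ∃ N, ∑' k, C (k + N) < ε :=
    ((tendsto_sum_nat_add C).eventually (gt_mem_nhds hε)).exists
  refine ⟨∑ k ∈ Finset.range N, g k, ?_, ?_⟩
  · exact Finset.sum_induction g AbsCont (fun _ _ ↦ .add) (absCont_const 0) fun k _ ↦ hg k
  have tail_eq : (fun x ↦ ∑' k, g k x) - ∑ k ∈ Finset.range N, g k =
      fun x ↦ ∑' k, g (k + N) x := by
    ext x
    simp [← (hsum x).sum_add_tsum_nat_add N]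
  have tail_var : VariationOnLE (fun x ↦ ∑' k, g (k + N) x) univ (∑' k, C (k + N)) :=
    .tsum (fun k ↦ hvar (k + N)) ((summable_nat_add_iff N).2 hC)
      fun x _ ↦ (summable_nat_add_iff N).2 (hsum x)
  rw [tail_eq]
  exact fun ι I a b hI hs ↦ (tail_var ι I a b hI hs).trans hN.le

end AbsCont

section AC

variable {𝕜 : Type*} [NormedField 𝕜] {X : Set ℝ} {E : Type*} [NormedAddCommGroup E]
  [NormedSpace 𝕜 E]

/-- The vector space `AC(X, E)` of absolutely continuous functions. -/
def AC (𝕜 : Type*) [NormedField 𝕜] (X : Set ℝ) (E : Type*) [NormedAddCommGroup E]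
    [NormedSpace 𝕜 E] : Submodule 𝕜 (X → E) where
  carrier := {f | AbsCont f}
  zero_mem' := absCont_const 0
  add_mem' := AbsCont.add
  smul_mem' c f hf := .of_norm_sub_le hf hf (norm_nonneg c) le_rfl fun x y ↦ by
    simp [← smul_sub, norm_smul]

instance : CoeFun (AC 𝕜 X E) fun _ ↦ X → E := ⟨Subtype.val⟩

/-- The constant functions, as a linear map `E → AC(X, E)`. -/
def AC.const (𝕜 : Type*) [NormedField 𝕜] (X : Set ℝ) (E : Type*) [NormedAddCommGroup E]
    [NormedSpace 𝕜 E] : E →ₗ[𝕜] AC 𝕜 X E where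
  toFun e := ⟨fun _ ↦ e, absCont_const e⟩
  map_add' _ _ := rfl
  map_smul' _ _ := rfl

end AC

section Cutoff

variable {X : Set ℝ} {E : Type*} [NormedAddCommGroup E]

theorem exists_absCont_ramp {c d : ℝ} (hcd : c < d) :
    ∃ u : X → ℝ, AbsCont u ∧ Monotone u ∧ (∀ z, u z ∈ Icc 0 1) ∧
      (∀ z : X, ↑z ≤ c → u z = 0) ∧ ∀ z : X, d ≤ z → u z = 1 := by
  have hpos : 0 < d - c := sub_pos.2 hcd
  refine ⟨fun z ↦ projIcc (0 : ℝ) 1 zero_le_one ((z - c) / (d - c)), ?_, ?_, fun z ↦ Subtype.prop _,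
    fun z hz ↦ ?_, fun z hz ↦ ?_⟩
  · refine .of_norm_sub_le absCont_coe absCont_coe (inv_pos.2 hpos).le le_rfl fun x y ↦ ?_
    have hlip := LipschitzWith.projIcc (h := zero_le_one' ℝ) |>.dist_le_mul
      ((x - c) / (d - c)) ((y - c) / (d - c))
    rw [Subtype.dist_eq, dist_eq_norm, dist_eq_norm, ← sub_div, sub_sub_sub_cancel_right,
      norm_div, Real.norm_of_nonneg hpos.le] at hlip
    simpa [div_eq_inv_mul] using hlip
  · intro y z hyz
    exact monotone_projIcc _
      (div_le_div_of_nonneg_right (sub_le_sub_right (Subtype.coe_le_coe.2 hyz) c) hpos.le)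
  · exact congrArg Subtype.val (projIcc_of_le_left _
      (div_nonpos_of_nonpos_of_nonneg (sub_nonpos.2 hz) hpos.le))
  · exact congrArg Subtype.val (projIcc_of_right_le _
      ((one_le_div hpos).2 (sub_le_sub_right hz c)))

theorem exists_absCont_real_bump (x : X) {r : ℝ} (hr : 0 < r) :
    ∃ φ : X → ℝ, AbsCont φ ∧ (∀ z, ‖φ z‖ ≤ 1) ∧ φ =ᶠ[𝓝 x] 1 ∧ (∀ z ∉ ball x r, φ z = 0) ∧
      VariationOnLE φ univ 2 := by
  obtain ⟨u, hu, hu_mono, hu_mem, hu_zero, hu_one⟩ :=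
    exists_absCont_ramp (X := X) (show x - r < x - r / 2 by linarith)
  obtain ⟨v, hv, hv_mono, hv_mem, hv_zero, hv_one⟩ :=
    exists_absCont_ramp (X := X) (show x + r / 2 < x + r by linarith)
  refine ⟨u - v, (AC ℝ X ℝ).sub_mem hu hv, fun z ↦ ?_, ?_, fun z hz ↦ ?_, ?_⟩
  · exact abs_sub_le_of_nonneg_of_le (hu_mem z).1 (hu_mem z).2 (hv_mem z).1 (hv_mem z).2
  · filter_upwards [ball_mem_nhds x (half_pos hr)] with z hz
    rw [mem_ball, Subtype.dist_eq, Real.dist_eq, abs_lt] at hz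
    simp [hu_one z (by linarith), hv_zero z (by linarith)]
  · rw [mem_ball, Subtype.dist_eq, Real.dist_eq, not_lt, le_abs'] at hz
    rcases hz with hz | hz
    · simp [hu_zero z (by linarith), hv_zero z (by linarith)]
    · simp [hu_one z (by linarith), hv_one z (by linarith)]
  · have variation_le : ∀ w : X → ℝ, Monotone w → (∀ z, w z ∈ Icc 0 1) →
        VariationOnLE w univ (1 - 0) := fun w hw hw_mem ↦
      variationOnLE_of_monotone hw zero_le_one (fun z _ ↦ (hw_mem z).1) fun z _ ↦ (hw_mem z).2
    convert (variation_le u hu_mono hu_mem).sub (variation_le v hv_mono hv_mem) using 1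
    norm_num

theorem exists_absCont_bump (𝕜 : Type*) [RCLike 𝕜] (x : X) {r : ℝ} (hr : 0 < r) :
    ∃ φ : X → 𝕜, AbsCont φ ∧ (∀ z, ‖φ z‖ ≤ 1) ∧ φ =ᶠ[𝓝 x] 1 ∧ (∀ z ∉ ball x r, φ z = 0) ∧
      VariationOnLE φ univ 2 := by
  obtain ⟨φ, hφ, hφ_le, hφ_one, hφ_zero, hφ_var⟩ := exists_absCont_real_bump x hr
  refine ⟨fun z ↦ (φ z : 𝕜), ?_, by simpa using hφ_le, ?_, by simpa using hφ_zero, ?_⟩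
  · exact .of_norm_sub_le hφ hφ zero_le_one le_rfl fun y z ↦ by
      rw [← RCLike.ofReal_sub, RCLike.norm_ofReal]
      simp
  · filter_upwards [hφ_one] with z hz
    simp [hz]
  · intro ι I a b hI hs
    simpa only [← RCLike.ofReal_sub, RCLike.norm_ofReal, ← Real.norm_eq_abs]
      using hφ_var ι I a b hI hs

theorem AC.exists_apply_ne_zero {𝕜 : Type*} [RCLike 𝕜] [NormedSpace 𝕜 E] [Nontrivial E] {x : X}
    {U : Set X} (hU : U ∈ 𝓝 x) :
    ∃ f : AC 𝕜 X E, f x ≠ 0 ∧ ∀ z ∉ U, f z = 0 := by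
  obtain ⟨r, hr, hrU⟩ := Metric.mem_nhds_iff.1 hU
  obtain ⟨φ, hφ, hφ_le, hφ_one, hφ_zero, -⟩ := exists_absCont_bump 𝕜 x hr
  obtain ⟨e, he⟩ := exists_ne (0 : E)
  refine ⟨⟨φ • fun _ ↦ e, hφ.smul (absCont_const e) hφ_le fun _ ↦ le_rfl⟩, ?_, fun z hz ↦ ?_⟩
  · simpa [hφ_one.self_of_nhds] using he
  · simp [hφ_zero z fun hzr ↦ hz (hrU hzr)]

theorem AbsCont.exists_cutoff (𝕜 : Type*) [RCLike 𝕜] [NormedSpace 𝕜 E] [CompactSpace X]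
    {f : X → E} (hf : AbsCont f) {x : X} (hfx : f x = 0) {ρ ε : ℝ} (hρ : 0 < ρ) (hε : 0 < ε) :
    ∃ g : X → E, AbsCont g ∧ g =ᶠ[𝓝 x] f ∧ (∀ z ∉ ball x ρ, g z = 0) ∧ VariationOnLE g univ ε := by
  obtain ⟨s, hs, hvar⟩ := hf.exists_variationOnLE_ball x (show 0 < ε / 3 by positivity)
  obtain ⟨φ, hφ, hφ_le, hφ_one, hφ_zero, hφ_var⟩ := exists_absCont_bump 𝕜 x (lt_min hρ hs)
  obtain ⟨M, hM⟩ := hf.exists_forall_norm_le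
  have hvar_ball : VariationOnLE f (ball x (min ρ s)) (ε / 3) :=
    hvar.mono (ball_subset_ball (min_le_right _ _))
  -- As `f x = 0`, the small variation of `f` near `x` also makes `f` itself small there.
  have norm_f_le : ∀ z ∈ ball x (min ρ s), ‖f z‖ ≤ ε / 3 := fun z hz ↦ by
    simpa [hfx] using hvar_ball.norm_sub_le hz (mem_ball_self (lt_min hρ hs))
  refine ⟨φ • f, hφ.smul hf hφ_le hM, ?_, fun z hz ↦ ?_, ?_⟩
  · filter_upwards [hφ_one] with z hz
    simp [hz]
  · simp [hφ_zero z fun h ↦ hz (ball_subset_ball (min_le_left _ _) h)]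
  · convert hφ_var.smul_of_eq_zero hφ_le hφ_zero hvar_ball (by positivity) norm_f_le using 1
    ring

theorem AC.exists_forall_eventuallyEq {𝕜 : Type*} [RCLike 𝕜] [NormedSpace 𝕜 E]
    [CompactSpace X] {f : ℕ → AC 𝕜 X E} {x : ℕ → X} {r : ℕ → ℝ} (hr : ∀ k, 0 < r k)
    (hdisj : Pairwise (Function.onFun Disjoint fun k ↦ ball (x k) (r k)))
    (hf : ∀ k, f k (x k) = 0) :
    ∃ G : AC 𝕜 X E, ∀ k, (G : X → E) =ᶠ[𝓝 (x k)] f k := by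
  choose g hg hgf hg_zero hg_var using fun k ↦
    (f k).2.exists_cutoff 𝕜 (hf k) (hr k) (pow_pos one_half_pos k)
  have eq_zero : ∀ {k l z}, z ∈ ball (x k) (r k) → l ≠ k → g l z = 0 := fun hz hlk ↦
    hg_zero _ _ fun hz' ↦ disjoint_left.1 (hdisj hlk) hz' hz
  -- At each point at most one summand is nonzero, so `E` need not be complete.
  have hsum : ∀ z, Summable fun k ↦ g k z := by
    intro z
    refine summable_of_hasFiniteSupport (Set.Subsingleton.finite fun k hk l hl ↦ ?_)
    by_contra hkl
    exact hk (eq_zero (not_imp_comm.1 (hg_zero l z) hl) hkl)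
  refine ⟨⟨fun z ↦ ∑' k, g k z, AbsCont.tsum hg hg_var summable_geometric_two hsum⟩, fun k ↦ ?_⟩
  filter_upwards [hgf k, ball_mem_nhds (x k) (hr k)] with z hz hzk
  rw [← hz]
  exact tsum_eq_single k fun l hl ↦ eq_zero hzk hl

end Cutoff

section MetricSpace

variable {α : Type*}

theorem exists_seq_pairwiseDisjoint_ball [MetricSpace α] {s : Set α} (hs : s.Infinite) :
    ∃ (x : ℕ → α) (r : ℕ → ℝ), (∀ k, x k ∈ s) ∧ (∀ k, 0 < r k) ∧
      Pairwise (Function.onFun Disjoint fun k ↦ ball (x k) (r k)) := by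
  have := hs.to_subtype
  obtain ⟨U, hU, hU_open, hU_disj⟩ := exists_seq_infinite_isOpen_pairwise_disjoint s
  choose x hx using fun k ↦ (hU k).nonempty
  choose ρ hρ hρU using fun k ↦ Metric.isOpen_iff.1 (hU_open k) (x k) (hx k)
  have le_dist : ∀ {k l}, k ≠ l → ρ k ≤ dist (x l) (x k) := fun hkl ↦
    not_lt.1 fun hlt ↦ disjoint_left.1 (hU_disj hkl) (hρU _ hlt) (hx _)
  refine ⟨fun k ↦ x k, fun k ↦ ρ k / 2, fun k ↦ (x k).2, fun k ↦ half_pos (hρ k),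
    fun k l hkl ↦ ball_disjoint_ball ?_⟩
  have hk := le_dist hkl
  have hl := le_dist hkl.symm
  rw [dist_comm] at hk
  rw [Subtype.dist_eq] at hk hl
  linarith

theorem dense_compl_of_finite_of_neBot_nhdsNE [TopologicalSpace α] [T1Space α] {s : Set α}
    (hs : s.Finite) (h : ∀ x ∈ s, (𝓝[≠] x).NeBot) : Dense sᶜ := by
  refine interior_eq_empty_iff_dense_compl.1 (eq_empty_of_forall_notMem fun x hx ↦ ?_)
  have := h x (interior_subset hx)
  exact infinite_of_mem_nhds x (mem_interior_iff_mem_nhds.1 hx) hs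

end MetricSpace

section SupportMap

variable {𝕜 : Type*} [NontriviallyNormedField 𝕜] {X Y : Set ℝ} {E F : Type*}
  [NormedAddCommGroup E] [NormedSpace 𝕜 E] [NormedAddCommGroup F] [NormedSpace 𝕜 F]
  {T : AC 𝕜 X E →ₗ[𝕜] AC 𝕜 Y F} {h : Y → X} {y : Y}

/-- The value of `T f` at `y` depends only on the germ of `f` at `h y`: the property of a support
map that survives when `T` is no longer assumed to be separating. -/
def IsLocalAlong (T : AC 𝕜 X E →ₗ[𝕜] AC 𝕜 Y F) (h : Y → X) : Prop :=
  ∀ (f : AC 𝕜 X E) (y : Y), (f : X → E) =ᶠ[𝓝 (h y)] 0 → T f y = 0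

/-- The points `y` at which `T f y` is not determined by the value `f (h y)` alone. -/
def singularSet (T : AC 𝕜 X E →ₗ[𝕜] AC 𝕜 Y F) (h : Y → X) : Set Y :=
  {y | ∃ f : AC 𝕜 X E, f (h y) = 0 ∧ T f y ≠ 0}

/-- The map `e ↦ T (const e) y` between the fibers; it represents `T` as a weighted composition
operator at the points outside `singularSet T h`. -/
def fiberMap (T : AC 𝕜 X E →ₗ[𝕜] AC 𝕜 Y F) (y : Y) : E →ₗ[𝕜] F :=
  LinearMap.proj y ∘ₗ (AC 𝕜 Y F).subtype ∘ₗ T ∘ₗ AC.const 𝕜 X E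

theorem IsLocalAlong.apply_congr (hT : IsLocalAlong T h) {f g : AC 𝕜 X E}
    (hfg : (f : X → E) =ᶠ[𝓝 (h y)] g) : T f y = T g y := by
  have := hT (f - g) y (hfg.sub_eq)
  simpa [sub_eq_zero] using this

theorem exists_le_norm_apply_of_mem_singularSet (hy : y ∈ singularSet T h) (C : ℝ) :
    ∃ f : AC 𝕜 X E, f (h y) = 0 ∧ C ≤ ‖T f y‖ := by
  obtain ⟨f, hf, hTf⟩ := hy
  obtain ⟨c, hc⟩ := NormedField.exists_lt_norm 𝕜 (C / ‖T f y‖)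
  refine ⟨c • f, by simp [hf], ?_⟩
  simpa [norm_smul] using ((div_lt_iff₀ (norm_pos_iff.2 hTf)).1 hc).le

theorem IsLocalAlong.neBot_nhdsNE (hT : IsLocalAlong T h) (hy : y ∈ singularSet T h) :
    (𝓝[≠] (h y)).NeBot := by
  obtain ⟨f, hf, hTf⟩ := hy
  refine ⟨fun hbot ↦ hTf (hT f y ?_)⟩
  rw [EventuallyEq, ← pure_sup_nhdsNE, hbot, sup_bot_eq]
  exact hf

theorem apply_eq_fiberMap_of_notMem_singularSet (hy : y ∉ singularSet T h) (f : AC 𝕜 X E) :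
    T f y = fiberMap T y (f (h y)) := by
  have hsub : T (f - AC.const 𝕜 X E (f (h y))) y = 0 := by
    by_contra hne
    exact hy ⟨_, sub_self _, hne⟩
  rwa [map_sub, Submodule.coe_sub, Pi.sub_apply, sub_eq_zero] at hsub

theorem fiberMap_injective [FiniteDimensional 𝕜 E] [FiniteDimensional 𝕜 F]
    (hdim : finrank 𝕜 E = finrank 𝕜 F) (hsurj : Function.Surjective T)
    (hy : y ∉ singularSet T h) : Function.Injective (fiberMap T y) := by
  refine (LinearMap.injective_iff_surjective_of_finrank_eq_finrank hdim).2 fun w ↦ ?_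
  obtain ⟨f, hf⟩ := hsurj (AC.const 𝕜 Y F w)
  refine ⟨f (h y), ?_⟩
  rw [← apply_eq_fiberMap_of_notMem_singularSet hy, hf]
  rfl

theorem continuous_fiberMap_apply [CompleteSpace 𝕜] [FiniteDimensional 𝕜 E] :
    Continuous fun p : Y × E ↦ fiberMap T p.1 p.2 := by
  let b := finBasis 𝕜 E
  have expand : (fun p : Y × E ↦ fiberMap T p.1 p.2) =
      fun p ↦ ∑ i, b.repr p.2 i • T (AC.const 𝕜 X E (b i)) p.1 := by
    ext p
    conv_lhs => rw [← b.sum_repr p.2, map_sum]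
    simp [fiberMap]
  rw [expand]
  refine continuous_finsetSum _ fun i _ ↦ .smul ?_ ?_
  · exact (b.coord i).continuous_of_finiteDimensional.comp continuous_snd
  · exact (T (AC.const 𝕜 X E (b i))).2.continuous.comp continuous_fst

theorem singularSet_eq_empty_of_dense_compl [CompleteSpace 𝕜] [FiniteDimensional 𝕜 E]
    (hcont : Continuous h) (hdense : Dense (singularSet T h)ᶜ) : singularSet T h = ∅ := by
  refine eq_empty_of_forall_notMem fun y ⟨f, hf, hTf⟩ ↦ hTf ?_
  have eq_fiberMap : (T f : Y → F) = fun y ↦ fiberMap T y (f (h y)) :=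
    (T f).2.continuous.ext_on hdense
      (continuous_fiberMap_apply.comp (continuous_id.prodMk (f.2.continuous.comp hcont)))
      fun _ hz ↦ apply_eq_fiberMap_of_notMem_singularSet hz f
  simp only [eq_fiberMap, hf, map_zero]

end SupportMap

section RCLike

variable {𝕜 : Type*} [RCLike 𝕜] {X Y : Set ℝ} {E F : Type*}
  [NormedAddCommGroup E] [NormedSpace 𝕜 E] [NormedAddCommGroup F] [NormedSpace 𝕜 F]
  {T : AC 𝕜 X E →ₗ[𝕜] AC 𝕜 Y F} {h : Y → X}

theorem IsLocalAlong.finite_image_singularSet [CompactSpace X] [CompactSpace Y]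
    (hT : IsLocalAlong T h) : (h '' singularSet T h).Finite := by
  by_contra hinf
  obtain ⟨x, r, hx, hr, hdisj⟩ := exists_seq_pairwiseDisjoint_ball hinf
  choose y hy hyx using hx
  choose f hf hf_le using fun k : ℕ ↦ exists_le_norm_apply_of_mem_singularSet (hy k) k
  obtain ⟨G, hG⟩ := AC.exists_forall_eventuallyEq hr hdisj
    fun k ↦ hyx k ▸ hf k
  obtain ⟨M, hM⟩ := (T G).2.exists_forall_norm_le
  obtain ⟨k, hk⟩ := exists_nat_gt M
  have hTG : T G (y k) = T (f k) (y k) := hT.apply_congr ((hyx k).symm ▸ hG k)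
  exact (hk.trans_le (hf_le k)).not_ge (hTG ▸ hM (y k))

theorem IsLocalAlong.dense_compl_singularSet [CompactSpace X] [CompactSpace Y]
    [FiniteDimensional 𝕜 E] [FiniteDimensional 𝕜 F] [Nontrivial F]
    (hT : IsLocalAlong T h) (hdim : finrank 𝕜 E = finrank 𝕜 F) (hsurj : Function.Surjective T)
    (honto : Function.Surjective h) : Dense (singularSet T h)ᶜ := by
  refine interior_eq_empty_iff_dense_compl.1 (eq_empty_of_forall_notMem fun y hy ↦ ?_)
  obtain ⟨g, hgy, hg⟩ := AC.exists_apply_ne_zero (𝕜 := 𝕜) (E := F) (mem_interior_iff_mem_nhds.1 hy)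
  obtain ⟨f, rfl⟩ := hsurj g
  have dense_compl_image : Dense (h '' singularSet T h)ᶜ :=
    dense_compl_of_finite_of_neBot_nhdsNE hT.finite_image_singularSet
      (forall_mem_image.2 fun _ ↦ hT.neBot_nhdsNE)
  have f_eq_zero : EqOn f 0 (h '' singularSet T h)ᶜ := by
    intro x hx
    obtain ⟨z, rfl⟩ := honto x
    have hz : z ∉ singularSet T h := fun hz ↦ hx (mem_image_of_mem h hz)
    refine (map_eq_zero_iff _ (fiberMap_injective hdim hsurj hz)).1 ?_
    rw [← apply_eq_fiberMap_of_notMem_singularSet hz, hg z hz]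
  have : f = 0 :=
    Subtype.ext (f.2.continuous.ext_on dense_compl_image continuous_const f_eq_zero)
  simp [this] at hgy

theorem injective_of_singularSet_eq_empty [FiniteDimensional 𝕜 E] [FiniteDimensional 𝕜 F]
    [Nontrivial F] (hdim : finrank 𝕜 E = finrank 𝕜 F) (hsurj : Function.Surjective T)
    (hempty : singularSet T h = ∅) : Function.Injective h := by
  have regular : ∀ y, y ∉ singularSet T h := by simp [hempty]
  intro y₁ y₂ hy
  by_contra hne
  obtain ⟨g, hg₂, hg₁⟩ :=
    AC.exists_apply_ne_zero (𝕜 := 𝕜) (E := F) (isOpen_ne.mem_nhds (Ne.symm hne))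
  obtain ⟨f, rfl⟩ := hsurj g
  have hf : f (h y₁) = 0 := by
    refine (map_eq_zero_iff _ (fiberMap_injective hdim hsurj (regular y₁))).1 ?_
    rw [← apply_eq_fiberMap_of_notMem_singularSet (regular y₁), hg₁ y₁ fun hy₁ ↦ hy₁ rfl]
  refine hg₂ ?_
  rw [apply_eq_fiberMap_of_notMem_singularSet (regular y₂), ← hy, hf, map_zero]

theorem support_map_homeomorph_general [CompactSpace X] [CompactSpace Y] [FiniteDimensional 𝕜 E]
    [FiniteDimensional 𝕜 F] (hdim : finrank 𝕜 E = finrank 𝕜 F) (hsurj : Function.Surjective T)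
    (hne : ∀ y, ∃ f, T f y ≠ 0) (hT : IsLocalAlong T h) (hcont : Continuous h)
    (honto : Function.Surjective h) : IsHomeomorph h := by
  refine isHomeomorph_iff_continuous_bijective.2 ⟨hcont, ?_, honto⟩
  rcases isEmpty_or_nonempty Y with _ | ⟨⟨y⟩⟩
  · exact Function.injective_of_subsingleton h
  · have : Nontrivial F := (hne y).elim fun _ hTf ↦ ⟨⟨_, _, hTf⟩⟩
    exact injective_of_singularSet_eq_empty hdim hsurj
      (singularSet_eq_empty_of_dense_compl hcont (hT.dense_compl_singularSet hdim hsurj honto))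

end RCLike

/-- Theorem 3.2: the support map of a separating bijection between spaces of
absolutely continuous functions with values in finite-dimensional spaces of the
same dimension is a homeomorphism. -/
theorem support_map_homeomorph {𝕜 : Type*} [RCLike 𝕜]
    {E F : Type*} [NormedAddCommGroup E] [NormedSpace 𝕜 E]
    [NormedAddCommGroup F] [NormedSpace 𝕜 F]
    {n : ℕ} [FiniteDimensional 𝕜 E] [FiniteDimensional 𝕜 F]
    (hdimE : Module.finrank 𝕜 E = n) (hdimF : Module.finrank 𝕜 F = n)
    {X Y : Set ℝ} (hX : IsCompact X) (hY : IsCompact Y)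
    (T : (X → E) → (Y → F))
    (hadd : ∀ f g : X → E, T (f + g) = T f + T g)
    (hsmul : ∀ (c : 𝕜) (f : X → E), T (c • f) = c • T f)
    (hmaps : ∀ f : X → E, AbsCont f → AbsCont (T f))
    (hinj : ∀ f g : X → E, AbsCont f → AbsCont g → T f = T g → f = g)
    (hsurj : ∀ g : Y → F, AbsCont g → ∃ f : X → E, AbsCont f ∧ T f = g)
    (hsep : Separating T)
    (h : Y → X) (hsupp : ∀ (y : Y) (x : X), InSupp T y x ↔ x = h y)
    (hcont : Continuous h) (honto : Function.Surjective h)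
    (hvanish : ∀ (f : X → E), AbsCont f → ∀ U : Set X, IsOpen U →
      (∀ x ∈ U, f x = 0) → ∀ y : Y, h y ∈ U → T f y = 0) :
    ∃ H : Y ≃ₜ X, ⇑H = h := by
  have : CompactSpace X := isCompact_iff_compactSpace.1 hX
  have : CompactSpace Y := isCompact_iff_compactSpace.1 hY
  let S : AC 𝕜 X E →ₗ[𝕜] AC 𝕜 Y F := LinearMap.restrict ⟨⟨T, hadd⟩, hsmul⟩ hmaps
  have hS_surj : Function.Surjective S := fun g ↦
    let ⟨f, hf, hTf⟩ := hsurj g g.2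
    ⟨⟨f, hf⟩, Subtype.ext hTf⟩
  have hS_ne : ∀ y, ∃ f, S f y ≠ 0 := fun y ↦
    let ⟨f, hf, _, hTf⟩ := (hsupp y (h y)).2 rfl univ isOpen_univ (mem_univ _)
    ⟨⟨f, hf⟩, hTf⟩
  have hS_local : IsLocalAlong S h := fun f y hfy ↦
    let ⟨U, hU, hU_open, hyU⟩ := _root_.eventually_nhds_iff.1 hfy
    hvanish f f.2 U hU_open hU y hyU
  exact isHomeomorph_iff_exists_homeomorph.1
    (support_map_homeomorph_general (hdimE.trans hdimF.symm) hS_surj hS_ne hS_local hcont honto)
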